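/- Let X and A be metric spaces (Borel subsets of Polish spaces), and let P(X) denote the space of Borel probability measures on X endowed with the topology of weak convergence. If c : X×A → ℝ is bounded below by a constant and K-inf-compact on X×A (respectively, inf-compact on X×A), then the function 𝔠 : P(X)×A → ℝ∪{+∞} defined by 𝔠(z,a) := ∫_X c(x,a) z(dx) is bounded below by the same constant and is K-inf-compact on P(X)×A (respectively, inf-compact on P(X)×A). -/

import Mathlib

open Filter Topology Set MeasureTheory
open scoped ENNReal NNReal

/-- `f` is inf-compact on `U`: all level sets `{y ∈ U : f y ≤ λ}`, `λ ∈ ℝ`, are compact. -/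
def InfCompactOn {E : Type*} [TopologicalSpace E] (f : E → EReal) (U : Set E) : Prop :=
  ∀ lam : ℝ, IsCompact {y ∈ U | f y ≤ (lam : EReal)}

/-- `u : S1 × S2 → EReal` is `K`-inf-compact on `S1 × S2`: for every nonempty compact
`K ⊆ S1` the restriction of `u` to `K × S2` is inf-compact. -/
def KInfCompact {S1 S2 : Type*} [TopologicalSpace S1] [TopologicalSpace S2]
    (u : S1 × S2 → EReal) : Prop :=
  ∀ K : Set S1, K.Nonempty → IsCompact K →
    InfCompactOn u {p : S1 × S2 | p.1 ∈ K}

/-- The one-step cost of the COMDP: `𝔠 (z, a) = ∫ c (x, a) z(dx)`, an `ℝ ∪ {+∞}`-valued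
integral of the function `c (·, a)`, which is bounded below by `b`. -/
noncomputable def cHat {X A : Type*} [MetricSpace X] [MeasurableSpace X] [BorelSpace X]
    (c : X × A → ℝ) (b : ℝ) (p : ProbabilityMeasure X × A) : EReal :=
  (b : EReal) + ((∫⁻ x, ENNReal.ofReal (c (x, p.2) - b) ∂(p.1 : Measure X) : ℝ≥0∞) : EReal)

/-!
The weak convergence enters through a Fatou lemma for a moving integrand: if
`f x ≤ liminf h i y` as `(y, i) → (x, l)` for every `x`, then `∫ f dz ≤ liminf ∫ h i dw` as
`(w, i) → (z, l)`. By the layer-cake formula, `∫ ⌈f⌉ dz` is the sum over `k : ℕ` of the masses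
`z {f > k}`, for which the inequality is the open-set half of the portmanteau theorem; rounding up
costs at most `1`, and scaling `f` and `h` by `n` makes this error `1 / n`.

For a `K`-inf-compact cost the Fatou lemma is used twice. With `l = 𝓝 a` it makes the expected cost
lower semicontinuous, so its level sets are closed. With `l` along actions that have no cluster
point the integrand tends to `∞`, hence so does the expected cost, uniformly for measures near a
given one; actions of bounded cost over a compact set of measures therefore cluster. If the cost is
inf-compact, Markov's inequality makes the measures of bounded cost tight, and Prokhorov's theorem
reduces to the `K`-inf-compact case.
-/

theorem tsum_liminf_le_liminf_tsum {ι κ : Type*} {l : Filter ι} (u : κ → ι → ℝ≥0∞) :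
    ∑' k, liminf (u k) l ≤ liminf (fun i ↦ ∑' k, u k i) l := by
  have liminf_eq (v : ι → ℝ≥0∞) : liminf v l = ⨆ S : l.sets, ⨅ i ∈ S.1, v i := by
    rw [liminf_eq_iSup_iInf, iSup_subtype']; rfl
  rw [ENNReal.tsum_eq_iSup_sum]
  refine iSup_le fun s ↦ ?_
  calc ∑ k ∈ s, liminf (u k) l
      = ∑ k ∈ s, ⨆ S : l.sets, ⨅ i ∈ S.1, u k i := by simp only [liminf_eq]
    _ = ⨆ S : l.sets, ∑ k ∈ s, ⨅ i ∈ S.1, u k i :=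
        ENNReal.finsetSum_iSup fun S T ↦ ⟨⟨S ∩ T, inter_mem S.2 T.2⟩, fun k ↦
          ⟨biInf_mono fun _ ↦ And.left, biInf_mono fun _ ↦ And.right⟩⟩
    _ ≤ ⨆ S : l.sets, ⨅ i ∈ S.1, ∑' k, u k i := iSup_mono fun S ↦ le_iInf₂ fun i hi ↦
        (Finset.sum_le_sum fun k _ ↦ biInf_le _ hi).trans (ENNReal.sum_le_tsum s)
    _ = liminf (fun i ↦ ∑' k, u k i) l := (liminf_eq _).symm

theorem encard_setOf_natCast_lt (t : ℝ≥0∞) : {k : ℕ | (k : ℝ≥0∞) < t}.encard = ⌈t⌉ₑ := by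
  induction t with
  | top => simp
  | coe t =>
    have range_eq : {k : ℕ | (k : ℝ≥0∞) < t} = Finset.range ⌈t⌉₊ := by
      ext k
      simp [Nat.lt_ceil, ← ENNReal.coe_natCast]
    rw [range_eq, Set.encard_coe_eq_coe_finsetCard]
    simp

theorem tsum_measure_natCast_lt_eq_lintegral_ceil {X : Type*} [MeasurableSpace X] {f : X → ℝ≥0∞}
    (hf : Measurable f) (μ : Measure X) :
    ∑' k : ℕ, μ {x | k < f x} = ∫⁻ x, (⌈f x⌉ₑ : ℝ≥0∞) ∂μ := by
  have hmeas (k : ℕ) : MeasurableSet {x | (k : ℝ≥0∞) < f x} := measurableSet_lt measurable_const hf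
  calc ∑' k : ℕ, μ {x | k < f x}
      = ∑' k : ℕ, ∫⁻ x, {x | (k : ℝ≥0∞) < f x}.indicator 1 x ∂μ :=
        tsum_congr fun k ↦ (lintegral_indicator_one (hmeas k)).symm
    _ = ∫⁻ x, ∑' k : ℕ, {k : ℕ | (k : ℝ≥0∞) < f x}.indicator 1 k ∂μ :=
        (lintegral_tsum fun k ↦ (measurable_one.indicator (hmeas k)).aemeasurable).symm
    _ = ∫⁻ x, (⌈f x⌉ₑ : ℝ≥0∞) ∂μ := lintegral_congr fun x ↦ by
        rw [← tsum_subtype, ← encard_setOf_natCast_lt]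
        exact ENNReal.tsum_set_one _

theorem toENNReal_ceil_le_add_one (t : ℝ≥0∞) : (⌈t⌉ₑ : ℝ≥0∞) ≤ t + 1 := by
  rcases eq_or_ne t ∞ with rfl | ht
  · simp
  · exact (ENat.ceil_lt_add_one ht).le

theorem le_of_forall_natCast_mul_le_add_one {a b : ℝ≥0∞}
    (h : ∀ n : ℕ, n * a ≤ n * b + 1) : a ≤ b := by
  refine ENNReal.le_of_forall_pos_le_add fun ε hε _ ↦ ?_
  obtain ⟨n, hn⟩ := ENNReal.exists_inv_nat_lt (ENNReal.coe_pos.2 hε).ne'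
  have hn₀ : (n : ℝ≥0∞) ≠ 0 := fun h ↦ by simp [h] at hn
  refine le_trans ?_ (add_le_add_right hn.le b)
  have hmul : n * a ≤ n * (b + (n : ℝ≥0∞)⁻¹) := by
    rw [mul_add, ENNReal.mul_inv_cancel hn₀ (ENNReal.natCast_ne_top n)]
    exact h n
  exact (ENNReal.mul_le_mul_iff_right hn₀ (ENNReal.natCast_ne_top n)).1 hmul

section Fatou

variable {X ι : Type*} [TopologicalSpace X] [MeasurableSpace X] [OpensMeasurableSpace X]
  [HasOuterApproxClosed X] {l : Filter ι} [l.IsCountablyGenerated]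

theorem measure_le_liminf_measure_prod {S : Set X} {T : ι → Set X}
    (hST : ∀ x ∈ S, ∀ᶠ p : X × ι in 𝓝 x ×ˢ l, p.1 ∈ T p.2) (z : ProbabilityMeasure X) :
    (z : Measure X) S ≤
      liminf (fun p : ProbabilityMeasure X × ι ↦ (p.1 : Measure X) (T p.2)) (𝓝 z ×ˢ l) := by
  obtain ⟨U, hU⟩ := l.exists_antitone_basis
  -- The open sets `V N` increase to a superset of `S` and `V N ⊆ T i` for `i ∈ U N`, so it suffices
  -- to apply the portmanteau inequality to each `V N`.
  let V (N : ℕ) : Set X := interior {x | ∀ i ∈ U N, x ∈ T i}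
  have hV_mono : Monotone V := fun M N hMN ↦
    interior_mono fun x hx i hi ↦ hx i (hU.antitone hMN hi)
  have hSV : S ⊆ ⋃ N, V N := fun x hx ↦ by
    obtain ⟨P, hP, Q, hQ, hPQ⟩ := eventually_prod_iff.1 (hST x hx)
    obtain ⟨N, -, hN⟩ := hU.1.mem_iff.1 hQ
    exact mem_iUnion.2 ⟨N, mem_interior_iff_mem_nhds.2 <|
      hP.mono fun y hy i hi ↦ hPQ hy (hN hi)⟩
  calc (z : Measure X) S
      ≤ ⨆ N, (z : Measure X) (V N) := (measure_mono hSV).trans_eq hV_mono.measure_iUnion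
    _ ≤ liminf (fun p : ProbabilityMeasure X × ι ↦ (p.1 : Measure X) (T p.2)) (𝓝 z ×ˢ l) :=
      iSup_le fun N ↦
        (ProbabilityMeasure.le_liminf_measure_open_of_tendsto tendsto_fst isOpen_interior).trans <|
        liminf_le_liminf <| (tendsto_snd.eventually (hU.mem N)).mono fun p hp ↦
          measure_mono fun x hx ↦ interior_subset hx p.2 hp

theorem lintegral_le_liminf_lintegral_prod_add_one [l.NeBot] {f : X → ℝ≥0∞}
    {h : ι → X → ℝ≥0∞} (hf : Measurable f) (hh : ∀ i, Measurable (h i))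
    (hfh : ∀ x, f x ≤ liminf (fun p : X × ι ↦ h p.2 p.1) (𝓝 x ×ˢ l)) (z : ProbabilityMeasure X) :
    ∫⁻ x, f x ∂(z : Measure X) ≤ liminf (fun p : ProbabilityMeasure X × ι ↦
      ∫⁻ x, h p.2 x ∂(p.1 : Measure X)) (𝓝 z ×ˢ l) + 1 := by
  have superlevel_le (k : ℕ) : (z : Measure X) {x | k < f x} ≤
      liminf (fun p : ProbabilityMeasure X × ι ↦ (p.1 : Measure X) {x | k < h p.2 x})
        (𝓝 z ×ˢ l) :=
    measure_le_liminf_measure_prod (T := fun i ↦ {x | k < h i x})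
      (fun x hx ↦ eventually_lt_of_lt_liminf (lt_of_lt_of_le hx (hfh x))) z
  calc ∫⁻ x, f x ∂(z : Measure X)
      ≤ ∫⁻ x, (⌈f x⌉ₑ : ℝ≥0∞) ∂(z : Measure X) := lintegral_mono fun x ↦ ENat.le_ceil_self
    _ = ∑' k : ℕ, (z : Measure X) {x | k < f x} :=
        (tsum_measure_natCast_lt_eq_lintegral_ceil hf _).symm
    _ ≤ ∑' k : ℕ, liminf (fun p : ProbabilityMeasure X × ι ↦
          (p.1 : Measure X) {x | k < h p.2 x}) (𝓝 z ×ˢ l) :=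
        ENNReal.tsum_le_tsum superlevel_le
    _ ≤ liminf (fun p : ProbabilityMeasure X × ι ↦
          ∑' k : ℕ, (p.1 : Measure X) {x | k < h p.2 x}) (𝓝 z ×ˢ l) :=
        tsum_liminf_le_liminf_tsum _
    _ ≤ liminf (fun p : ProbabilityMeasure X × ι ↦
          ∫⁻ x, h p.2 x ∂(p.1 : Measure X) + 1) (𝓝 z ×ˢ l) := by
        refine liminf_le_liminf <| .of_forall fun p ↦ ?_
        rw [tsum_measure_natCast_lt_eq_lintegral_ceil (hh p.2)]
        exact (lintegral_mono fun x ↦ toENNReal_ceil_le_add_one _).trans_eq <| by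
          simp [lintegral_add_right]
    _ = liminf (fun p : ProbabilityMeasure X × ι ↦
          ∫⁻ x, h p.2 x ∂(p.1 : Measure X)) (𝓝 z ×ˢ l) + 1 :=
        liminf_add_const _ (fun p : ProbabilityMeasure X × ι ↦
          ∫⁻ x, h p.2 x ∂(p.1 : Measure X)) 1 (by isBoundedDefault) (by isBoundedDefault)

theorem lintegral_le_liminf_lintegral_prod [l.NeBot] {f : X → ℝ≥0∞} {h : ι → X → ℝ≥0∞}
    (hf : Measurable f) (hh : ∀ i, Measurable (h i))
    (hfh : ∀ x, f x ≤ liminf (fun p : X × ι ↦ h p.2 p.1) (𝓝 x ×ˢ l)) (z : ProbabilityMeasure X) :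
    ∫⁻ x, f x ∂(z : Measure X) ≤ liminf (fun p : ProbabilityMeasure X × ι ↦
      ∫⁻ x, h p.2 x ∂(p.1 : Measure X)) (𝓝 z ×ˢ l) := by
  refine le_of_forall_natCast_mul_le_add_one fun n ↦ ?_
  have hn : (n : ℝ≥0∞) ≠ ∞ := ENNReal.natCast_ne_top n
  rw [← lintegral_const_mul _ hf, ← ENNReal.liminf_const_mul_of_ne_top hn]
  simp only [← lintegral_const_mul _ (hh _)]
  refine lintegral_le_liminf_lintegral_prod_add_one (hf.const_mul _)
    (fun i ↦ (hh i).const_mul _) (fun x ↦ ?_) z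
  rw [ENNReal.liminf_const_mul_of_ne_top hn]
  gcongr
  exact hfh x

end Fatou

section ClusterPoints

variable {Y A : Type*} [TopologicalSpace Y] [TopologicalSpace A]

theorem exists_mapClusterPt_prodMk_of_isCompact {ι : Type*} {l : Filter ι} {K : Set Y}
    (hK : IsCompact K) {u : ι → Y} (hu : ∀ᶠ i in l, u i ∈ K) {v : ι → A} {a : A}
    (ha : MapClusterPt a l v) : ∃ y ∈ K, MapClusterPt (y, a) l (fun i ↦ (u i, v i)) := by
  obtain ⟨F, hFl, hFa⟩ := mapClusterPt_iff_ultrafilter.1 ha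
  obtain ⟨y, hyK, hFy⟩ := hK.ultrafilter_le_nhds (F.map u) <| tendsto_principal.2 (hFl hu)
  exact ⟨y, hyK, mapClusterPt_iff_ultrafilter.2 ⟨F, hFl, .prodMk_nhds hFy hFa⟩⟩

theorem isCompact_of_exists_mapClusterPt_snd [TopologicalSpace.PseudoMetrizableSpace A]
    {K : Set Y} {L : Set (Y × A)} (hL : IsClosed L) (hK : IsCompact K) (hLK : ∀ p ∈ L, p.1 ∈ K)
    (hcluster : ∀ p : ℕ → Y × A, (∀ᶠ n in atTop, p n ∈ L) →
      ∃ b, MapClusterPt b atTop fun n ↦ (p n).2) :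
    IsCompact L := by
  let _ := TopologicalSpace.pseudoMetrizableSpacePseudoMetric A
  have hcc : IsCountablyCompact L := .of_seq_clusterPt fun p hp ↦ by
    obtain ⟨b, hb⟩ := hcluster p hp
    obtain ⟨y, -, hy⟩ := exists_mapClusterPt_prodMk_of_isCompact hK (hp.mono fun n ↦ hLK (p n)) hb
    exact ⟨(y, b), hL.mem_of_mapClusterPt hy hp, hy⟩
  have hsnd : IsCompact (Prod.snd '' L) := (hcc.image continuous_snd).isSeqCompact.isCompact
  exact (hK.prod hsnd).of_isClosed_subset hL fun p hp ↦ ⟨hLK p hp, mem_image_of_mem _ hp⟩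

end ClusterPoints

section InfCompact

variable {E S1 S2 : Type*} [TopologicalSpace E] [TopologicalSpace S1] [TopologicalSpace S2]

theorem InfCompactOn.of_isClosed_subset {f : E → EReal} {U C : Set E} (hf : InfCompactOn f U)
    (hC : IsClosed C) (hCU : C ⊆ U) : InfCompactOn f C := fun r ↦ by
  have level_eq : {y ∈ C | f y ≤ r} = {y ∈ U | f y ≤ r} ∩ C := by grind
  exact level_eq ▸ (hf r).inter_right hC

theorem InfCompactOn.isCompact_ennreal_le {g : E → ℝ≥0∞}
    (hg : InfCompactOn (fun y ↦ (g y : EReal)) univ) (r : ℝ≥0) : IsCompact {y | g y ≤ r} := by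
  simpa only [mem_univ, true_and, ← EReal.coe_nnreal_eq_coe_real,
    EReal.coe_ennreal_le_coe_ennreal_iff] using hg r

theorem InfCompactOn.kInfCompact [T2Space S1] {u : S1 × S2 → EReal} (hu : InfCompactOn u univ) :
    KInfCompact u := fun _ _ hK ↦
  hu.of_isClosed_subset (hK.isClosed.preimage continuous_fst) (subset_univ _)

theorem infCompactOn_const_add_iff {f : E → EReal} {U : Set E} (b : ℝ) :
    InfCompactOn (fun y ↦ (b : EReal) + f y) U ↔ InfCompactOn f U := by
  have level_eq (r : ℝ) : {y ∈ U | (b : EReal) + f y ≤ r} = {y ∈ U | f y ≤ (r - b : ℝ)} := by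
    ext y
    rw [mem_ofPred, mem_ofPred, add_comm, EReal.coe_sub, EReal.le_sub_iff_add_le] <;> simp
  refine ⟨fun h r ↦ ?_, fun h r ↦ ?_⟩
  · simpa only [level_eq, add_sub_cancel_right] using h (r + b)
  · simpa only [level_eq] using h (r - b)

theorem kInfCompact_const_add_iff {u : S1 × S2 → EReal} (b : ℝ) :
    KInfCompact (fun p ↦ (b : EReal) + u p) ↔ KInfCompact u := by
  simp only [KInfCompact, infCompactOn_const_add_iff]

theorem KInfCompact.isClosed_le [FirstCountableTopology S1] [FirstCountableTopology S2]
    [T2Space S1] [T2Space S2] {u : S1 × S2 → EReal} (hu : KInfCompact u) (r : ℝ) :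
    IsClosed {p | u p ≤ r} := by
  refine IsSeqClosed.isClosed fun p p₀ hp hlim ↦ ?_
  have hK : IsCompact (insert p₀.1 (range fun n ↦ (p n).1)) :=
    ((continuous_fst.tendsto p₀).comp hlim).isCompact_insert_range
  have hlevel := hu _ (insert_nonempty _ _) hK r
  exact (hlevel.isClosed.mem_of_tendsto hlim <| .of_forall fun n ↦
    ⟨mem_insert_of_mem _ (mem_range_self n), hp n⟩).2

theorem KInfCompact.lowerSemicontinuous [FirstCountableTopology S1] [FirstCountableTopology S2]
    [T2Space S1] [T2Space S2] {u : S1 × S2 → EReal} (hu : KInfCompact u) :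
    LowerSemicontinuous u := fun p y hy ↦ by
  obtain ⟨r, hyr, hrp⟩ := EReal.lt_iff_exists_real_btwn.1 hy
  filter_upwards [(hu.isClosed_le r).isOpen_compl.mem_nhds (not_le.2 hrp)] with q hq
  exact hyr.trans (not_le.1 hq)

theorem KInfCompact.lowerSemicontinuous_ennreal [FirstCountableTopology S1]
    [FirstCountableTopology S2] [T2Space S1] [T2Space S2] {g : S1 × S2 → ℝ≥0∞}
    (hg : KInfCompact fun p ↦ (g p : EReal)) : LowerSemicontinuous g := fun p y hy ↦ by
  simpa using hg.lowerSemicontinuous p y (by simpa using hy)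

theorem KInfCompact.tendsto_top [FirstCountableTopology S1] {u : S1 × S2 → EReal}
    (hu : KInfCompact u) {ι : Type*} {l : Filter ι} [l.IsCountablyGenerated] {a : ι → S2}
    (ha : ∀ b, ¬ MapClusterPt b l a) (x : S1) :
    Tendsto (fun p : S1 × ι ↦ u (p.1, a p.2)) (𝓝 x ×ˢ l) (𝓝 ⊤) := by
  rw [EReal.tendsto_nhds_top_iff_real]
  by_contra! ⟨r, hr⟩
  obtain ⟨p, hp, hpr⟩ := exists_seq_forall_of_frequently hr
  have hK : IsCompact (insert x (range fun n ↦ (p n).1)) :=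
    (tendsto_fst.comp hp).isCompact_insert_range
  obtain ⟨q, -, hq⟩ := (hu _ (insert_nonempty _ _) hK r).exists_mapClusterPt
    (u := fun n ↦ ((p n).1, a (p n).2)) (f := atTop) <| tendsto_principal.2 <| .of_forall fun n ↦
      ⟨mem_insert_of_mem _ (mem_range_self n), hpr n⟩
  exact ha q.2 ((hq.continuousAt_comp continuous_snd.continuousAt).of_comp (tendsto_snd.comp hp))

end InfCompact

section ExpectedCost

variable {X A : Type*} [TopologicalSpace X] [MeasurableSpace X] [TopologicalSpace A]

/-- The expected one-step cost of the action `p.2` when the state has law `p.1`, for a nonnegative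
cost `g` that may take the value `∞`. -/
noncomputable def expectedCost (g : X × A → ℝ≥0∞) (p : ProbabilityMeasure X × A) : ℝ≥0∞ :=
  ∫⁻ x, g (x, p.2) ∂(p.1 : Measure X)

theorem measurable_prodMk_right_of_lowerSemicontinuous [OpensMeasurableSpace X] {g : X × A → ℝ≥0∞}
    (hg : LowerSemicontinuous g) (a : A) : Measurable fun x ↦ g (x, a) :=
  (hg.comp (Continuous.prodMk_left a)).measurable

theorem lowerSemicontinuous_expectedCost [OpensMeasurableSpace X] [HasOuterApproxClosed X]
    [FirstCountableTopology A] {g : X × A → ℝ≥0∞} (hg : LowerSemicontinuous g) :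
    LowerSemicontinuous (expectedCost g) := fun ⟨z, a⟩ ↦ by
  have hmeas (a' : A) := measurable_prodMk_right_of_lowerSemicontinuous hg a'
  refine lowerSemicontinuousAt_iff_le_liminf.2 ?_
  rw [nhds_prod_eq]
  refine lintegral_le_liminf_lintegral_prod (h := fun a' x ↦ g (x, a')) (hmeas a) hmeas
    (fun x ↦ ?_) z
  rw [← nhds_prod_eq]
  exact lowerSemicontinuousAt_iff_le_liminf.1 (hg (x, a))

variable [BorelSpace X] [TopologicalSpace.MetrizableSpace X] [TopologicalSpace.MetrizableSpace A]
  {g : X × A → ℝ≥0∞}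

theorem KInfCompact.tendsto_expectedCost_top (hg : KInfCompact fun p ↦ (g p : EReal))
    {ι : Type*} {l : Filter ι} [l.IsCountablyGenerated] [l.NeBot] {a : ι → A}
    (ha : ∀ b, ¬ MapClusterPt b l a) (z : ProbabilityMeasure X) :
    Tendsto (fun p : ProbabilityMeasure X × ι ↦ expectedCost g (p.1, a p.2)) (𝓝 z ×ˢ l) (𝓝 ∞) := by
  have hlim (x : X) : Tendsto (fun p : X × ι ↦ g (p.1, a p.2)) (𝓝 x ×ˢ l) (𝓝 ∞) :=
    EReal.tendsto_coe_ennreal.1 (hg.tendsto_top ha x)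
  have hfatou := lintegral_le_liminf_lintegral_prod (f := fun _ ↦ ∞)
    (h := fun i x ↦ g (x, a i)) measurable_const
    (fun i ↦ measurable_prodMk_right_of_lowerSemicontinuous hg.lowerSemicontinuous_ennreal (a i))
    (fun x ↦ (hlim x).liminf_eq.ge) z
  exact tendsto_of_le_liminf_of_limsup_le (by simpa [expectedCost] using hfatou) le_top

theorem KInfCompact.exists_mapClusterPt_of_expectedCost_le
    (hg : KInfCompact fun p ↦ (g p : EReal)) {K : Set (ProbabilityMeasure X)} (hK : IsCompact K)
    {ι : Type*} {l : Filter ι} [l.IsCountablyGenerated] [l.NeBot] {p : ι → ProbabilityMeasure X × A}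
    (hpK : ∀ᶠ i in l, (p i).1 ∈ K) {r : ℝ≥0∞} (hr : r ≠ ∞)
    (hpr : ∀ᶠ i in l, expectedCost g (p i) ≤ r) : ∃ b, MapClusterPt b l fun i ↦ (p i).2 := by
  by_contra! ha
  obtain ⟨z, -, hz⟩ := hK.exists_mapClusterPt (f := l) (u := fun i ↦ (p i).1) <|
    tendsto_principal.2 hpK
  have hlarge := (hg.tendsto_expectedCost_top ha z).eventually (lt_mem_nhds hr.lt_top)
  obtain ⟨P, hP, Q, hQ, hPQ⟩ := eventually_prod_iff.1 hlarge
  obtain ⟨i, hPi, hQi, hri⟩ := ((hz.frequently hP).and_eventually (hQ.and hpr)).exists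
  exact (hPQ hPi hQi).not_ge hri

theorem kInfCompact_expectedCost (hg : KInfCompact fun p ↦ (g p : EReal)) :
    KInfCompact fun p ↦ (expectedCost g p : EReal) := fun K _ hK r ↦ by
  have hlsc : LowerSemicontinuous fun p ↦ (expectedCost g p : EReal) :=
    continuous_coe_ennreal_ereal.comp_lowerSemicontinuous
      (lowerSemicontinuous_expectedCost hg.lowerSemicontinuous_ennreal)
      EReal.coe_ennreal_strictMono.monotone
  refine isCompact_of_exists_mapClusterPt_snd
    ((hK.isClosed.preimage continuous_fst).inter (hlsc.isClosed_preimage r)) hK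
    (fun p hp ↦ hp.1) fun p hp ↦ hg.exists_mapClusterPt_of_expectedCost_le hK
      (hp.mono fun n ↦ And.left) (r := .ofReal r) ENNReal.ofReal_ne_top (hp.mono fun n hn ↦ ?_)
  simpa using EReal.toENNReal_le_toENNReal hn.2

theorem InfCompactOn.isTightMeasureSet_of_expectedCost_le
    (hg : InfCompactOn (fun p ↦ (g p : EReal)) univ) {r : ℝ≥0∞} (hr : r ≠ ∞) :
    IsTightMeasureSet {(z : Measure X) | z ∈ {z : ProbabilityMeasure X |
      ∃ a, expectedCost g (z, a) ≤ r}} := by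
  refine isTightMeasureSet_iff_exists_isCompact_measure_compl_le.2 fun ε hε ↦ ?_
  obtain ⟨n, hn⟩ : ∃ n : ℕ, r < n * ε := ENNReal.exists_nat_mul_gt hε.ne' hr
  have hn₀ : (n : ℝ≥0∞) ≠ 0 := left_ne_zero_of_mul hn.ne_bot
  have hcompact : IsCompact {p | g p ≤ n} := mod_cast hg.isCompact_ennreal_le n
  refine ⟨Prod.fst '' {p | g p ≤ n}, hcompact.image continuous_fst, ?_⟩
  rintro _ ⟨z, ⟨a, hza⟩, rfl⟩
  have hmeas : Measurable fun x ↦ g (x, a) :=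
    measurable_prodMk_right_of_lowerSemicontinuous hg.kInfCompact.lowerSemicontinuous_ennreal a
  calc (z : Measure X) (Prod.fst '' {p | g p ≤ n})ᶜ
      ≤ (z : Measure X) {x | n ≤ g (x, a)} := measure_mono fun x hx ↦ by
        have hxa : ¬ g (x, a) ≤ n := fun h ↦ hx ⟨(x, a), h, rfl⟩
        exact (not_le.1 hxa).le
    _ ≤ expectedCost g (z, a) / n :=
        meas_ge_le_lintegral_div hmeas.aemeasurable hn₀ (ENNReal.natCast_ne_top n)
    _ ≤ r / n := by gcongr
    _ ≤ ε := ENNReal.div_le_of_le_mul' hn.le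

theorem infCompactOn_expectedCost (hg : InfCompactOn (fun p ↦ (g p : EReal)) univ) :
    InfCompactOn (fun p ↦ (expectedCost g p : EReal)) univ := fun r ↦ by
  let S : Set (ProbabilityMeasure X) := {z | ∃ a, expectedCost g (z, a) ≤ ENNReal.ofReal r}
  have hS : IsCompact (closure S) := isCompact_closure_of_isTightMeasureSet <|
    hg.isTightMeasureSet_of_expectedCost_le ENNReal.ofReal_ne_top
  have hLS (p) (hp : (expectedCost g p : EReal) ≤ r) : p.1 ∈ closure S :=
    subset_closure ⟨p.2, by simpa using EReal.toENNReal_le_toENNReal hp⟩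
  have level_eq : {p ∈ univ | (expectedCost g p : EReal) ≤ r} =
      {p ∈ {p | p.1 ∈ closure S} | (expectedCost g p : EReal) ≤ r} := by
    ext p
    simpa using hLS p
  rw [level_eq]
  rcases (closure S).eq_empty_or_nonempty with hempty | hne
  · simp [hempty]
  · exact kInfCompact_expectedCost hg.kInfCompact (closure S) hne hS r

/-- The expected cost `∫ c (x, a) z(dx)` of an extended-real-valued cost `c` bounded below by `b`,
encoded as `b` plus the integral of `c - b`. It is this integral only where `b ≤ c`, since
`EReal.toENNReal` sends negative values to `0`. -/
noncomputable def expectedERealCost (c : X × A → EReal) (b : ℝ) (p : ProbabilityMeasure X × A) :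
    EReal :=
  b + (expectedCost (fun q ↦ (c q - b).toENNReal) p : EReal)

end ExpectedCost

theorem cHat_eq_expectedERealCost {X A : Type*} [MetricSpace X] [MeasurableSpace X] [BorelSpace X]
    (c : X × A → ℝ) (b : ℝ) : cHat c b = expectedERealCost (fun p ↦ (c p : EReal)) b := by
  ext p
  simp only [cHat, expectedERealCost, expectedCost, ← EReal.coe_sub, EReal.real_coe_toENNReal]

theorem stmt9_general {X A : Type*} [TopologicalSpace X] [TopologicalSpace.MetrizableSpace X]
    [MeasurableSpace X] [BorelSpace X] [TopologicalSpace A] [TopologicalSpace.MetrizableSpace A]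
    (c : X × A → EReal) (b : ℝ) (hb : ∀ p, b ≤ c p) :
    (∀ p, b ≤ expectedERealCost c b p) ∧
    (KInfCompact c → KInfCompact (expectedERealCost c b)) ∧
    (InfCompactOn c univ → InfCompactOn (expectedERealCost c b) univ) := by
  have hc : c = fun p ↦ (b : EReal) + ((c p - b).toENNReal : EReal) := by
    ext p
    have hsub : 0 ≤ c p - b :=
      (EReal.le_sub_iff_add_le (by simp) (by simp)).2 (by simpa using hb p)
    rw [EReal.coe_toENNReal hsub, add_comm, EReal.sub_add_cancel]
  refine ⟨fun p ↦ le_add_of_nonneg_right (EReal.coe_ennreal_nonneg _), fun h ↦ ?_, fun h ↦ ?_⟩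
  · rw [hc, kInfCompact_const_add_iff] at h
    exact (kInfCompact_const_add_iff b).2 (kInfCompact_expectedCost h)
  · rw [hc, infCompactOn_const_add_iff] at h
    exact (infCompactOn_const_add_iff b).2 (infCompactOn_expectedCost h)

/-- If `c : X × A → ℝ` is bounded below by a constant `b` and `K`-inf-compact
(respectively, inf-compact) on `X × A`, then the COMDP cost `𝔠 (z, a) = ∫ c (x, a) z(dx)`
on `P(X) × A` is bounded below by the same constant and `K`-inf-compact
(respectively, inf-compact) on `P(X) × A`. -/
theorem stmt9 {X A : Type*} [MetricSpace X] [MeasurableSpace X] [BorelSpace X] [MetricSpace A]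
    (c : X × A → ℝ) (b : ℝ) (hb : ∀ p, b ≤ c p) :
    (∀ p : ProbabilityMeasure X × A, (b : EReal) ≤ cHat c b p) ∧
    (KInfCompact (fun p : X × A => ((c p : ℝ) : EReal)) → KInfCompact (cHat c b)) ∧
    (InfCompactOn (fun p : X × A => ((c p : ℝ) : EReal)) Set.univ →
      InfCompactOn (cHat c b) Set.univ) := by
  rw [cHat_eq_expectedERealCost]
  exact stmt9_general (fun p ↦ (c p : EReal)) b (mod_cast hb)
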